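/- arXiv:1905.08925 — 3 statements merged into one kernel-verified Lean document; each statement's English description precedes it below -/
import Mathlib

section
/- The round-robin algorithm is a (2 − 1/n)-approximation of maxmin share fairness for chores: fix the agent order 1,…,n and let the agents repeatedly take turns in cyclic order, each agent at her turn removing and keeping an unallocated item of minimum cost to her (arbitrary tie-breaking). Then the resulting allocation X_1,…,X_n satisfies c_i(X_i) ≤ (2 − 1/n)·MMS_i for every agent i. -/
/-- The maxmin share of an agent with cost vector `c` over `m` items,
with respect to partitions into `n` (possibly empty) bundles. -/
noncomputable def MMS (n m : ℕ) (c : Fin m → ℝ) : ℝ :=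
  ⨅ P : Fin m → Fin n, ⨆ k : Fin n, ∑ j ∈ Finset.univ.filter (fun j => P j = k), c j

/-- The maxmin share is attained: some partition has all its bundles of cost at most `MMS`. -/
theorem exists_partition_le_MMS {n m : ℕ} (hn : 0 < n) (c : Fin m → ℝ) :
    ∃ P : Fin m → Fin n, ∀ k, ∑ j ∈ Finset.univ.filter (fun j => P j = k), c j ≤ MMS n m c := by
  have : Nonempty (Fin n) := ⟨⟨0, hn⟩⟩
  obtain ⟨P, hP⟩ := exists_eq_ciInf_of_finite
    (f := fun P : Fin m → Fin n =>
      ⨆ k : Fin n, ∑ j ∈ Finset.univ.filter (fun j => P j = k), c j)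
  refine ⟨P, fun k => ?_⟩
  rw [MMS, ← hP]
  exact le_ciSup (f := fun k => ∑ j ∈ Finset.univ.filter (fun j => P j = k), c j)
    (Set.finite_range _).bddAbove k

theorem sum_le_mul_MMS {n m : ℕ} (hn : 0 < n) (c : Fin m → ℝ) :
    ∑ j, c j ≤ n * MMS n m c := by
  obtain ⟨P, hP⟩ := exists_partition_le_MMS hn c
  rw [← Finset.sum_fiberwise Finset.univ P c]
  simpa using Finset.sum_le_sum fun k (_ : k ∈ Finset.univ) => hP k

theorem le_MMS {n m : ℕ} (hn : 0 < n) {c : Fin m → ℝ} (hc : ∀ j, 0 ≤ c j) (j : Fin m) :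
    c j ≤ MMS n m c := by
  obtain ⟨P, hP⟩ := exists_partition_le_MMS hn c
  exact (Finset.single_le_sum (fun x _ => hc x) (by simp)).trans (hP (P j))

/-- If `g` at each point of the progression `i, i + n, i + 2n, …` is at most every later value
below `m`, then `n` times the sum of `g` along the progression is bounded by the full sum. -/
theorem mul_sum_progression_le {n m i : ℕ} {g : ℕ → ℝ} (hg : ∀ t, 0 ≤ g t)
    (hmin : ∀ j t, i + j * n ≤ t → t < m → g (i + j * n) ≤ g t) (k : ℕ) (hk : i + k * n < m) :
    n * ∑ j ∈ Finset.range k, g (i + j * n) ≤ ∑ t ∈ Finset.range (i + k * n), g t := by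
  induction k with
  | zero => simpa using Finset.sum_nonneg fun t _ => hg t
  | succ k ih =>
    have hsucc : i + (k + 1) * n = i + k * n + n := by ring
    rw [hsucc] at hk ⊢
    rw [Finset.sum_range_succ, Finset.sum_range_add, mul_add]
    refine add_le_add (ih (by omega)) ?_
    have h := Finset.card_nsmul_le_sum (Finset.range n) (fun x => g (i + k * n + x))
      (g (i + k * n)) fun x hx => hmin k _ (by omega) (by
        have := Finset.mem_range.mp hx
        omega)
    simpa using h

/-- The residue class of `i` modulo `n` below `m`, as an arithmetic progression. -/
theorem sum_filter_mod_eq {n m i q : ℕ} (hi : i < n) (hq : i + q * n < m)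
    (hq' : m ≤ i + (q + 1) * n) (g : ℕ → ℝ) :
    ∑ t ∈ (Finset.range m).filter (fun t => t % n = i), g t =
      ∑ j ∈ Finset.range (q + 1), g (i + j * n) := by
  refine Finset.sum_nbij' (fun t => t / n) (fun j => i + j * n) ?_ ?_ ?_ ?_ ?_
  · intro t ht
    simp only [Finset.mem_filter, Finset.mem_range] at ht ⊢
    have h := Nat.mod_add_div t n
    rw [ht.2, mul_comm] at h
    exact Nat.lt_of_mul_lt_mul_right (a := n) (by omega)
  · intro j hj
    simp only [Finset.mem_filter, Finset.mem_range] at hj ⊢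
    have := Nat.mul_le_mul_right n (Nat.lt_succ_iff.mp hj)
    exact ⟨by omega, by rw [Nat.add_mul_mod_self_right, Nat.mod_eq_of_lt hi]⟩
  · intro t ht
    have h := Nat.mod_add_div t n
    rw [(Finset.mem_filter.mp ht).2, mul_comm] at h
    exact h
  · intro j _
    simp [Nat.add_mul_div_right _ _ (Nat.zero_lt_of_lt hi), Nat.div_eq_of_lt hi]
  · intro t ht
    have h := Nat.mod_add_div t n
    rw [(Finset.mem_filter.mp ht).2, mul_comm] at h
    rw [h]

/-- the round-robin algorithm is a `(2 − 1/n)`-approximation of MMS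
fairness for chores.  `pick t` is the item taken at turn `t`; turns proceed in the
cyclic agent order `0,1,…,n-1,0,1,…`, so turn `t` belongs to agent `t % n`, who
takes an unallocated item of minimum cost to her (arbitrary tie-breaking).  Agent
`i`'s bundle consists of the items picked at her turns. -/
theorem roundRobin_approx (n m : ℕ) (hn : 0 < n)
    (c : Fin n → Fin m → ℝ) (hc : ∀ i j, 0 ≤ c i j)
    (pick : Fin m → Fin m) (hbij : Function.Bijective pick)
    (hgreedy : ∀ t j : Fin m, (∀ t' : Fin m, t' < t → pick t' ≠ j) →
      c ⟨(t : ℕ) % n, Nat.mod_lt _ hn⟩ (pick t) ≤ c ⟨(t : ℕ) % n, Nat.mod_lt _ hn⟩ j) :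
    ∀ i : Fin n,
      ∑ t ∈ Finset.univ.filter (fun t : Fin m => (t : ℕ) % n = (i : ℕ)), c i (pick t) ≤
        (2 - 1 / (n : ℝ)) * MMS n m (c i) := by
  intro i
  have hn' : (0 : ℝ) < n := by exact_mod_cast hn
  have hinj : Function.Injective pick := hbij.1
  let g : ℕ → ℝ := fun t => if h : t < m then c i (pick ⟨t, h⟩) else 0
  have hgval : ∀ t : Fin m, g t = c i (pick t) := fun t => by simp [g]
  have hg : ∀ t, 0 ≤ g t := fun t => by
    by_cases h : t < m <;> simp [g, h, hc]
  have hmin : ∀ j t, (i : ℕ) + j * n ≤ t → t < m → g (i + j * n) ≤ g t := by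
    intro j t hjt ht
    have hmod : ((i : ℕ) + j * n) % n = i := by
      rw [Nat.add_mul_mod_self_right, Nat.mod_eq_of_lt i.2]
    have h := hgreedy ⟨i + j * n, by omega⟩ (pick ⟨t, ht⟩) fun t' ht' heq => by
      have := congrArg Fin.val (hinj heq)
      have := Fin.lt_def.mp ht'
      simp_all
      omega
    simp only [hmod] at h
    simpa [g, ht, lt_of_le_of_lt hjt ht] using h
  have hbundle : ∑ t ∈ Finset.univ.filter (fun t : Fin m => (t : ℕ) % n = (i : ℕ)), c i (pick t) =
      ∑ t ∈ (Finset.range m).filter (fun t => t % n = i), g t := by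
    rw [Finset.sum_filter, Finset.sum_filter, ← Fin.sum_univ_eq_sum_range
      (fun t => if t % n = i then g t else 0)]
    simp only [hgval]
  have htotal : ∑ t ∈ Finset.range m, g t ≤ n * MMS n m (c i) := by
    rw [← Fin.sum_univ_eq_sum_range]
    simp only [hgval]
    rw [hbij.sum_comp (c i)]
    exact sum_le_mul_MMS hn (c i)
  have hcoef : (2 - 1 / (n : ℝ)) * n = 2 * n - 1 := by field_simp
  have hone : (1 : ℝ) ≤ n := by exact_mod_cast hn
  rw [hbundle]
  refine le_of_mul_le_mul_left ?_ hn'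
  rw [← mul_assoc, mul_comm (n : ℝ) (2 - 1 / (n : ℝ)), hcoef]
  rcases lt_or_ge (i : ℕ) m with him | him
  · let q := (m - 1 - i) / n
    have hdiv : n * q ≤ m - 1 - i := Nat.mul_div_le _ _
    have hdiv' : m - 1 - i < n * (q + 1) := Nat.lt_mul_div_succ _ hn
    rw [mul_comm] at hdiv hdiv'
    have hq : (i : ℕ) + q * n < m := by omega
    rw [sum_filter_mod_eq i.2 hq (by omega), Finset.sum_range_succ]
    have hlast : g (i + q * n) ≤ MMS n m (c i) :=
      (hgval ⟨i + q * n, hq⟩).trans_le (le_MMS hn (hc i) _)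
    have hprefix : ∑ t ∈ Finset.range (i + q * n + 1), g t ≤ ∑ t ∈ Finset.range m, g t :=
      Finset.sum_le_sum_of_subset_of_nonneg (Finset.range_mono hq) fun t _ _ => hg t
    rw [Finset.sum_range_succ] at hprefix
    have hprog := mul_sum_progression_le hg hmin q hq
    nlinarith [mul_le_mul_of_nonneg_left hlast (sub_nonneg.mpr hone)]
  · have hempty : (Finset.range m).filter (fun t => t % n = i) = ∅ :=
      Finset.filter_eq_empty_iff.mpr fun t ht hmod => by
        have := Finset.mem_range.mp ht
        have := Nat.mod_le t n
        omega
    have hnonneg : 0 ≤ n * MMS n m (c i) := (Finset.sum_nonneg fun t _ => hg t).trans htotal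
    have hMMS : 0 ≤ MMS n m (c i) := nonneg_of_mul_nonneg_right hnonneg hn'
    rw [hempty, Finset.sum_empty, mul_zero]
    exact mul_nonneg (by linarith) hMMS
end

section
/- No deterministic strategyproof public-ranking algorithm for 2 agents and 6 chores has approximation ratio smaller than 6/5: fix the public ranking in which, for each agent, item 1 is the largest-cost item and item 6 the smallest, so the algorithm's domain consists of profiles (c_1, c_2) with c_{i,1} ≥ c_{i,2} ≥ … ≥ c_{i,6} ≥ 0 for i = 1,2. For every deterministic algorithm A on this domain that is strategyproof (for every agent i, every such profile c, and every consistent alternative report c'_i, c_i(A(c)_i) ≤ c_i(A(c'_i, c_{−i})_i)) and every ε > 0, there exists a profile (c_1, c_2) in the domain such that, writing x = A(c_1, c_2), some agent i satisfies c_i(x_i) > (6/5 − ε)·MMS_i. -/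
/-- A cost vector over 6 items consistent with the fixed public ranking:
nonnegative and nonincreasing (item 0 has the largest cost, item 5 the smallest). -/
def ConsistentRanked (v : Fin 6 → ℝ) : Prop :=
  (∀ j, 0 ≤ v j) ∧ ∀ j j' : Fin 6, j ≤ j' → v j' ≤ v j

/-- The cost under the integer cost vector `c` of the bundle that `P` assigns to agent `i`. -/
def bundleCost (c : Fin 6 → ℕ) (P : Fin 6 → Fin 2) (i : Fin 2) : ℕ :=
  ∑ j ∈ Finset.univ.filter (fun j => P j = i), c j

/-- An integer cost vector regarded as a real one. -/
def realCost (c : Fin 6 → ℕ) : Fin 6 → ℝ := fun j => (c j : ℝ)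

lemma cast_bundleCost (c : Fin 6 → ℕ) (P : Fin 6 → Fin 2) (i : Fin 2) :
    (bundleCost c P i : ℝ) = ∑ j ∈ Finset.univ.filter (fun j => P j = i), realCost c j := by
  simp [bundleCost, realCost]

lemma consistentRanked_realCost {c : Fin 6 → ℕ} (hc : Antitone c) :
    ConsistentRanked (realCost c) :=
  ⟨fun j => Nat.cast_nonneg (c j), fun _ _ h => Nat.cast_le.mpr (hc h)⟩

lemma MMS_nonneg {n m : ℕ} {c : Fin m → ℝ} (hc : ∀ j, 0 ≤ c j) : 0 ≤ MMS n m c :=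
  Real.iInf_nonneg fun _ => Real.iSup_nonneg fun _ => Finset.sum_nonneg fun j _ => hc j

lemma MMS_realCost_le {c : Fin 6 → ℕ} {m : ℕ} (P : Fin 6 → Fin 2)
    (hP : ∀ k, bundleCost c P k ≤ m) : MMS 2 6 (realCost c) ≤ m := by
  refine (ciInf_le (Set.finite_range _).bddBelow P).trans (ciSup_le fun k => ?_)
  rw [← cast_bundleCost]
  exact_mod_cast hP k

/-- A bundle within a factor `6/5 - ε` of the maxmin share costs strictly less than `6/5` of any
positive upper bound on that share. -/
lemma five_mul_bundleCost_lt {c : Fin 6 → ℕ} {m : ℕ} (hm : 0 < m) (P : Fin 6 → Fin 2)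
    (hP : ∀ k, bundleCost c P k ≤ m) {ε : ℝ} (hε : 0 < ε) {Q : Fin 6 → Fin 2} {i : Fin 2}
    (hQ : (bundleCost c Q i : ℝ) ≤ (6 / 5 - ε) * MMS 2 6 (realCost c)) :
    5 * bundleCost c Q i < 6 * m := by
  have hle := MMS_realCost_le P hP
  have hnonneg : 0 ≤ MMS 2 6 (realCost c) := MMS_nonneg fun j => Nat.cast_nonneg (c j)
  have hm' : (0 : ℝ) < m := Nat.cast_pos.mpr hm
  have hlt : (5 * bundleCost c Q i : ℝ) < 6 * m := by
    rcases hnonneg.eq_or_lt with h | h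
    · rw [← h] at hQ
      linarith
    · nlinarith [mul_pos hε h]
  exact_mod_cast hlt

/-- One item is as costly as the five others together. -/
def oneHeavy : Fin 6 → ℕ := ![5, 1, 1, 1, 1, 1]

/-- Four items are twice as costly as the two others. -/
def fourHeavy : Fin 6 → ℕ := ![2, 2, 2, 2, 1, 1]

/-- An even split pairs the heavy item with one light item. -/
def threeHeavy : Fin 6 → ℕ := ![3, 1, 1, 1, 1, 1]

lemma antitone_oneHeavy : Antitone oneHeavy := by unfold Antitone; decide

lemma antitone_fourHeavy : Antitone fourHeavy := by unfold Antitone; decide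

lemma antitone_threeHeavy : Antitone threeHeavy := by unfold Antitone; decide

lemma exists_singleton_bundle : ∀ P : Fin 6 → Fin 2, (∀ i, bundleCost oneHeavy P i < 6) →
    ∃ i, ∀ j, P j = i ↔ j = 0 := by
  decide +kernel

lemma bundleCost_of_singleton : ∀ (P : Fin 6 → Fin 2) (i : Fin 2), (∀ j, P j = i ↔ j = 0) →
    bundleCost oneHeavy P i = 5 ∧ bundleCost oneHeavy P (1 - i) = 5 ∧
      bundleCost fourHeavy P i = 2 := by
  decide +kernel

lemma singleton_bundle_of_costs : ∀ (Q : Fin 6 → Fin 2) (i : Fin 2),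
    5 ≤ bundleCost oneHeavy Q i → bundleCost fourHeavy Q i ≤ 2 → ∀ j, Q j = i ↔ j = 0 := by
  decide +kernel

lemma bundleCost_oneHeavy_lt_five : ∀ (R : Fin 6 → Fin 2) (i : Fin 2),
    bundleCost fourHeavy R i < 6 → bundleCost threeHeavy R (1 - i) < 5 →
      bundleCost oneHeavy R (1 - i) < 5 := by
  decide +kernel

/-- no deterministic strategyproof public-ranking algorithm for
2 agents and 6 chores has approximation ratio smaller than 6/5.  The domain of
`A` is profiles of cost vectors consistent with the fixed public ranking, and
strategyproofness is required against all consistent alternative reports.  For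
every such `A` and every `ε > 0` there is a consistent profile on which some
agent's bundle costs more than `(6/5 − ε)·MMS_i`. -/
theorem public_ranking_sp_lower_bound
    (A : (Fin 2 → Fin 6 → ℝ) → (Fin 6 → Fin 2))
    (hSP : ∀ c : Fin 2 → Fin 6 → ℝ, (∀ i, ConsistentRanked (c i)) →
      ∀ (i : Fin 2) (c'i : Fin 6 → ℝ), ConsistentRanked c'i →
      ∑ j ∈ Finset.univ.filter (fun j => A c j = i), c i j ≤
        ∑ j ∈ Finset.univ.filter (fun j => A (Function.update c i c'i) j = i), c i j)
    (ε : ℝ) (hε : 0 < ε) :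
    ∃ c : Fin 2 → Fin 6 → ℝ,
      (∀ i, ConsistentRanked (c i)) ∧
      ∃ i : Fin 2,
        (6 / 5 - ε) * MMS 2 6 (c i) <
          ∑ j ∈ Finset.univ.filter (fun j => A c j = i), c i j := by
  by_contra! hA
  have ha := consistentRanked_realCost antitone_oneHeavy
  have hb := consistentRanked_realCost antitone_fourHeavy
  have hd := consistentRanked_realCost antitone_threeHeavy
  set caa : Fin 2 → Fin 6 → ℝ := fun _ => realCost oneHeavy
  have hcaa_apply : ∀ k, caa k = realCost oneHeavy := fun _ => rfl
  have haa : ∀ k, ConsistentRanked (caa k) := fun _ => ha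
  obtain ⟨i, hi⟩ := exists_singleton_bundle (A caa) fun k => by
    have h := hA caa haa k
    rw [hcaa_apply k, ← cast_bundleCost] at h
    have := five_mul_bundleCost_lt (m := 5) (by norm_num) ![0, 1, 1, 1, 1, 1] (by decide) hε h
    omega
  obtain ⟨hPa, -, hPb⟩ := bundleCost_of_singleton _ i hi
  have hne : 1 - i ≠ i := (by decide : ∀ k : Fin 2, 1 - k ≠ k) i
  set cba := Function.update caa i (realCost fourHeavy) with hcba
  have hcba_i : cba i = realCost fourHeavy := by simp [hcba]
  have hcba_o : cba (1 - i) = realCost oneHeavy := by simp [hcba, hne, hcaa_apply]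
  have hba : ∀ k, ConsistentRanked (cba k) := by
    intro k
    rcases eq_or_ne k i with rfl | hk
    · rwa [hcba_i]
    · simpa [hcba, hk] using ha
  -- Agent `i` still receives only the heavy item after switching to `fourHeavy`.
  have hQ : ∀ j, A cba j = i ↔ j = 0 := by
    have h₁ := hSP caa haa i _ hb
    have h₂ := hSP cba hba i _ ha
    have hback : Function.update cba i (realCost oneHeavy) = caa := by
      rw [hcba, Function.update_idem]
      exact Function.update_eq_self i caa
    rw [hback, hcba_i, ← cast_bundleCost, ← cast_bundleCost, Nat.cast_le, hPb] at h₂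
    rw [← hcba, hcaa_apply i, ← cast_bundleCost, ← cast_bundleCost, Nat.cast_le, hPa] at h₁
    exact singleton_bundle_of_costs _ i h₁ h₂
  obtain ⟨-, hQa, -⟩ := bundleCost_of_singleton _ i hQ
  set cbd := Function.update cba (1 - i) (realCost threeHeavy) with hcbd
  have hcbd_i : cbd i = realCost fourHeavy := by simp [hcbd, hne.symm, hcba_i]
  have hcbd_o : cbd (1 - i) = realCost threeHeavy := by simp [hcbd]
  have hbd : ∀ k, ConsistentRanked (cbd k) := by
    intro k
    rcases eq_or_ne k (1 - i) with rfl | hk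
    · rwa [hcbd_o]
    · simpa [hcbd, hk] using hba k
  -- The other agent now gains by switching from `oneHeavy` to `threeHeavy`.
  have hgain : 5 ≤ bundleCost oneHeavy (A cbd) (1 - i) := by
    have h := hSP cba hba (1 - i) _ hd
    rwa [← hcbd, hcba_o, ← cast_bundleCost, ← cast_bundleCost, Nat.cast_le, hQa] at h
  have hRb : bundleCost fourHeavy (A cbd) i < 6 := by
    have h := hA cbd hbd i
    rw [hcbd_i, ← cast_bundleCost] at h
    have := five_mul_bundleCost_lt (m := 5) (by norm_num) ![0, 0, 1, 1, 0, 1] (by decide) hε h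
    omega
  have hRd : bundleCost threeHeavy (A cbd) (1 - i) < 5 := by
    have h := hA cbd hbd (1 - i)
    rw [hcbd_o, ← cast_bundleCost] at h
    have := five_mul_bundleCost_lt (m := 4) (by norm_num) ![0, 0, 1, 1, 1, 1] (by decide) hε h
    omega
  exact absurd hgain (bundleCost_oneHeavy_lt_five _ i hRb hRd).not_ge
end

section
/- There exists a universal constant C such that for all integers n ≥ 2 and m > n there is a randomized algorithm A mapping each profile of rankings (one linear order per agent over the m items) to a probability distribution over allocations, such that: (i) A is strategyproof in expectation: for every agent i, every cost vector c_i consistent with ranking R_i, every profile of rankings of the other agents, and every alternative ranking R'_i, the expected c_i-cost of agent i's bundle under A(R_i, R_{−i}) is at most that under A(R'_i, R_{−i}); and (ii) for every profile of rankings R and every profile of cost vectors (c_1,…,c_n) consistent with R (with each c_i not identically zero), E_{x ∼ A(R)}[max_{i} c_i(x_i)/MMS_i] ≤ C·√(1 + log₂ n). -/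
lemma le_MMS_of_forall_exists_bundle {n m : ℕ} (hn : 0 < n) (c : Fin m → ℝ) (B : ℝ)
    (h : ∀ P : Fin m → Fin n, ∃ k, B ≤ ∑ j ∈ Finset.univ.filter (fun j => P j = k), c j) :
    B ≤ MMS n m c := by
  have : Nonempty (Fin n) := ⟨⟨0, hn⟩⟩
  refine le_ciInf fun P => ?_
  obtain ⟨k, hk⟩ := h P
  exact hk.trans (le_ciSup (f := fun k => ∑ j ∈ Finset.univ.filter (fun j => P j = k), c j)
    (Set.finite_range _).bddAbove k)

lemma cost_le_MMS {n m : ℕ} (hn : 0 < n) (c : Fin m → ℝ) (hc : ∀ j, 0 ≤ c j) (j : Fin m) :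
    c j ≤ MMS n m c :=
  le_MMS_of_forall_exists_bundle hn c _ fun P =>
    ⟨P j, Finset.single_le_sum (fun a _ => hc a) (by simp)⟩

lemma average_le_MMS {n m : ℕ} (hn : 0 < n) (c : Fin m → ℝ) :
    (∑ j, c j) / n ≤ MMS n m c := by
  have hn' : (0 : ℝ) < n := by exact_mod_cast hn
  have : Nonempty (Fin n) := ⟨⟨0, hn⟩⟩
  refine le_MMS_of_forall_exists_bundle hn c _ fun P => ?_
  have key : ∑ _k : Fin n, (∑ j, c j) / n ≤
      ∑ k : Fin n, ∑ j ∈ Finset.univ.filter (fun j => P j = k), c j := by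
    rw [Finset.sum_fiberwise]
    simp [mul_div_cancel₀ _ hn'.ne']
  obtain ⟨k, -, hk⟩ := Finset.exists_le_of_sum_le Finset.univ_nonempty key
  exact ⟨k, hk⟩

/-- The `k`-th position of a ranking of `m` items, split into a block of `n` consecutive
positions and an offset inside that block. -/
def blockPosition (n m : ℕ) (hn : 0 < n) : Fin m ↪ Fin m × Fin n :=
  (Fin.castLEEmb (Nat.le_mul_of_pos_right m hn)).trans finProdFinEquiv.symm.toEmbedding

lemma blockPosition_fst_val {n m : ℕ} (hn : 0 < n) (k : Fin m) :
    ((blockPosition n m hn k).1 : ℕ) = k / n := rfl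

/-- The doubly stochastic matrix with rows indexed by items (padded by dummies) and columns indexed
by pairs of a block and an agent, whose entry is `1 / n` when the agent ranks the item inside the
block. -/
noncomputable def blockMatrix (n m : ℕ) (hn : 0 < n) (R : Fin n → (Fin m ≃ Fin m)) :
    Matrix (Fin m × Fin n) (Fin m × Fin n) ℝ :=
  Matrix.of fun p s =>
    if (Equiv.Perm.viaFintypeEmbedding (R s.2).symm (blockPosition n m hn) p).1 = s.1
    then (n : ℝ)⁻¹ else 0

lemma blockMatrix_mem_doublyStochastic {n m : ℕ} (hn : 0 < n) (R : Fin n → (Fin m ≃ Fin m)) :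
    blockMatrix n m hn R ∈ doublyStochastic ℝ (Fin m × Fin n) := by
  have hn' : (n : ℝ) ≠ 0 := by exact_mod_cast hn.ne'
  rw [mem_doublyStochastic_iff_sum]
  refine ⟨fun p s => ?_, fun p => ?_, fun s => ?_⟩
  · simp only [blockMatrix, Matrix.of_apply]
    split_ifs <;> positivity
  · simp [blockMatrix, Fintype.sum_prod_type_right, hn']
  · simp only [blockMatrix, Matrix.of_apply]
    rw [Equiv.sum_comp (Equiv.Perm.viaFintypeEmbedding (R s.2).symm (blockPosition n m hn))
      (fun p => if p.1 = s.1 then (n : ℝ)⁻¹ else 0)]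
    simp [Fintype.sum_prod_type_right, hn']

/-- The allocation induced by a matching of items with pairs of a block and an agent. -/
def matchingAllocation (n m : ℕ) (hn : 0 < n) (σ : Equiv.Perm (Fin m × Fin n)) : Fin m → Fin n :=
  fun j => (σ (blockPosition n m hn j)).2

lemma exists_matching_lottery {n m : ℕ} (hn : 0 < n) (R : Fin n → (Fin m ≃ Fin m)) :
    ∃ w : Equiv.Perm (Fin m × Fin n) → ℝ, (∀ σ, 0 ≤ w σ) ∧ ∑ σ, w σ = 1 ∧
      (∀ j i, ∑ σ, w σ * (if matchingAllocation n m hn σ j = i then 1 else 0) = (n : ℝ)⁻¹) ∧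
      (∀ σ, w σ ≠ 0 → ∀ j, ((σ (blockPosition n m hn j)).1 : ℕ) =
        (R (matchingAllocation n m hn σ j)).symm j / n) := by
  obtain ⟨w, hw0, hw1, hw⟩ :=
    exists_eq_sum_perm_of_mem_doublyStochastic (blockMatrix_mem_doublyStochastic hn R)
  have entry : ∀ p s, ∑ σ, w σ * (if σ p = s then 1 else 0) = blockMatrix n m hn R p s := by
    intro p s
    rw [← hw]
    simp [Matrix.sum_apply, Equiv.Perm.permMatrix, PEquiv.toMatrix_apply, eq_comm]
  refine ⟨w, hw0, hw1, fun j i => ?_, fun σ hσ j => ?_⟩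
  · have : ∀ σ : Equiv.Perm (Fin m × Fin n),
        (if matchingAllocation n m hn σ j = i then (1 : ℝ) else 0) =
          ∑ k, if σ (blockPosition n m hn j) = (k, i) then 1 else 0 := by
      intro σ
      by_cases h : (σ (blockPosition n m hn j)).2 = i <;>
        simp [matchingAllocation, Prod.ext_iff, h]
    simp only [this, Finset.mul_sum]
    rw [Finset.sum_comm]
    simp only [entry, blockMatrix, Matrix.of_apply]
    simp
  · set p := blockPosition n m hn j with hp
    have hpos : 0 < blockMatrix n m hn R p (σ p) := by
      rw [← entry]
      refine lt_of_lt_of_le ?_ (Finset.single_le_sum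
        (f := fun τ : Equiv.Perm (Fin m × Fin n) => w τ * (if τ p = σ p then 1 else 0))
        (fun τ _ => mul_nonneg (hw0 τ) (by split_ifs <;> norm_num)) (Finset.mem_univ σ))
      simpa using lt_of_le_of_ne (hw0 σ) hσ.symm
    simp only [blockMatrix, Matrix.of_apply] at hpos
    split_ifs at hpos with h
    · rw [← h, hp, Equiv.Perm.viaFintypeEmbedding_apply_image, blockPosition_fst_val]
      rfl
    · exact absurd hpos (lt_irrefl _)

/-- An item outside the first block costs at most the average of the block preceding it. -/
lemma mul_cost_le_sum_preceding_block {n m : ℕ} (hn : 0 < n) (r : Fin m ≃ Fin m) (c : Fin m → ℝ)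
    (hc : ∀ j, 0 ≤ c j) (hr : ∀ k k' : Fin m, k ≤ k' → c (r k') ≤ c (r k)) (j : Fin m)
    (hj : (r.symm j : ℕ) / n ≠ 0) :
    n * c j ≤ ∑ a, if (r.symm a : ℕ) / n + 1 = (r.symm j : ℕ) / n then c a else 0 := by
  obtain ⟨b, hb⟩ := Nat.exists_eq_succ_of_ne_zero hj
  have hbound : (b + 1) * n ≤ r.symm j := by
    rw [← Nat.succ_eq_add_one, ← hb]
    exact Nat.div_mul_le_self _ _
  have hlt : ∀ t : Fin n, b * n + t < (r.symm j : ℕ) := fun t => by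
    have := t.2
    rw [add_mul] at hbound
    omega
  let f : Fin n → Fin m := fun t => r ⟨b * n + t, (hlt t).trans (r.symm j).2⟩
  have hf : Function.Injective f := fun s t hst => by
    have := r.injective hst
    simp only [Fin.mk.injEq, Nat.add_left_cancel_iff] at this
    exact Fin.ext this
  calc n * c j = ∑ _t : Fin n, c j := by simp
    _ ≤ ∑ t : Fin n, c (f t) := Finset.sum_le_sum fun t _ => by
        have := hr ⟨b * n + t, (hlt t).trans (r.symm j).2⟩ (r.symm j) (hlt t).le
        simpa using this
    _ = ∑ a ∈ Finset.univ.map ⟨f, hf⟩, c a := by simp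
    _ ≤ ∑ a ∈ Finset.univ.filter (fun a => (r.symm a : ℕ) / n + 1 = (r.symm j : ℕ) / n), c a := by
        refine Finset.sum_le_sum_of_subset_of_nonneg (fun a ha => ?_) fun a _ _ => hc a
        obtain ⟨t, -, rfl⟩ := Finset.mem_map.mp ha
        simp only [Finset.mem_filter, Finset.mem_univ, true_and, Function.Embedding.coeFn_mk, f,
          Equiv.symm_apply_apply]
        rw [hb, mul_comm, Nat.mul_add_div hn, Nat.div_eq_of_lt t.2]
    _ = _ := Finset.sum_filter _ _

lemma cost_le_two_mul_MMS_of_injOn_block {n m : ℕ} (hn : 0 < n) (r : Fin m ≃ Fin m)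
    (c : Fin m → ℝ) (hc : ∀ j, 0 ≤ c j) (hr : ∀ k k' : Fin m, k ≤ k' → c (r k') ≤ c (r k))
    (S : Finset (Fin m)) (hS : Set.InjOn (fun j => (r.symm j : ℕ) / n) S) :
    ∑ j ∈ S, c j ≤ 2 * MMS n m c := by
  have hn' : (0 : ℝ) < n := by exact_mod_cast hn
  have hM0 : 0 ≤ MMS n m c :=
    (div_nonneg (Finset.sum_nonneg fun j _ => hc j) hn'.le).trans (average_le_MMS hn c)
  have first : ∑ j ∈ S.filter (fun j => (r.symm j : ℕ) / n = 0), c j ≤ MMS n m c := by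
    have hcard : (S.filter (fun j => (r.symm j : ℕ) / n = 0)).card ≤ 1 :=
      Finset.card_le_one.mpr fun a ha b hb => by
        rw [Finset.mem_filter] at ha hb
        exact hS ha.1 hb.1 (ha.2.trans hb.2.symm)
    calc _ ≤ (S.filter (fun j => (r.symm j : ℕ) / n = 0)).card • MMS n m c :=
          Finset.sum_le_card_nsmul _ _ _ fun j _ => cost_le_MMS hn c hc j
      _ ≤ 1 • MMS n m c := nsmul_le_nsmul_left hM0 hcard
      _ = _ := one_nsmul _
  have rest : n * ∑ j ∈ S.filter (fun j => ¬ (r.symm j : ℕ) / n = 0), c j ≤ ∑ j, c j := by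
    rw [Finset.mul_sum]
    refine (Finset.sum_le_sum fun j hj =>
      mul_cost_le_sum_preceding_block hn r c hc hr j (Finset.mem_filter.mp hj).2).trans ?_
    rw [Finset.sum_comm]
    refine Finset.sum_le_sum fun a _ => ?_
    rw [← Finset.sum_filter, Finset.sum_const]
    refine (nsmul_le_nsmul_left (hc a) (Finset.card_le_one.mpr fun x hx y hy => ?_)).trans_eq
      (one_nsmul _)
    simp only [Finset.mem_filter] at hx hy
    exact hS hx.1.1 hy.1.1 (hx.2.symm.trans hy.2)
  have rest' : ∑ j ∈ S.filter (fun j => ¬ (r.symm j : ℕ) / n = 0), c j ≤ MMS n m c :=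
    ((le_div_iff₀' hn').mpr rest).trans (average_le_MMS hn c)
  rw [← Finset.sum_filter_add_sum_filter_not S (fun j => (r.symm j : ℕ) / n = 0)]
  linarith

lemma matchingAllocation_cost_le {n m : ℕ} (hn : 0 < n) (R : Fin n → (Fin m ≃ Fin m))
    (σ : Equiv.Perm (Fin m × Fin n))
    (hσ : ∀ j, ((σ (blockPosition n m hn j)).1 : ℕ) =
      (R (matchingAllocation n m hn σ j)).symm j / n)
    (i : Fin n) (c : Fin m → ℝ) (hc : ∀ j, 0 ≤ c j)
    (hr : ∀ k k' : Fin m, k ≤ k' → c (R i k') ≤ c (R i k)) :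
    ∑ j ∈ Finset.univ.filter (fun j => matchingAllocation n m hn σ j = i), c j ≤
      2 * MMS n m c := by
  refine cost_le_two_mul_MMS_of_injOn_block hn (R i) c hc hr _ fun a ha b hb hab => ?_
  simp only [Finset.coe_filter, Finset.mem_univ, true_and, Set.mem_ofPred_eq] at ha hb
  have ha' := hσ a
  have hb' := hσ b
  rw [ha] at ha'
  rw [hb] at hb'
  exact (blockPosition n m hn).injective (σ.injective
    (Prod.ext (Fin.ext (ha'.trans (Eq.trans hab hb'.symm))) (ha.trans hb.symm)))

lemma sum_pushforward_mul {α β : Type*} [Fintype α] [Fintype β] [DecidableEq β] (w : α → ℝ)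
    (f : α → β) (g : β → ℝ) :
    ∑ x, (∑ a, if f a = x then w a else 0) * g x = ∑ a, w a * g (f a) := by
  simp only [Finset.sum_mul, ite_mul, zero_mul]
  rw [Finset.sum_comm]
  simp

/-- there is a universal constant `C` such that for all `n ≥ 2` and
`m > n` there is a randomized ordinal algorithm `A` (mapping a profile of rankings
— each an equiv `Fin m ≃ Fin m`, position `k` holding item `R i k`, earlier
positions having weakly larger cost — to a probability distribution over
allocations `Fin m → Fin n`, encoded by nonnegative weights summing to 1) that is
strategyproof in expectation and achieves expected approximation ratio at most
`C·√(1 + log₂ n)`: `E[max_i c_i(x_i)/MMS_i] ≤ C·√(1 + log₂ n)` for every profile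
of consistent, nonnegative, not-identically-zero cost vectors. -/
theorem rand_ordinal_sp_sqrtlog_approx :
    ∃ C : ℝ, 0 < C ∧
      ∀ n m : ℕ, 2 ≤ n → n < m →
        ∃ A : (Fin n → (Fin m ≃ Fin m)) → ((Fin m → Fin n) → ℝ),
          -- A R is a probability distribution over allocations
          (∀ R, (∀ x, 0 ≤ A R x) ∧ ∑ x : Fin m → Fin n, A R x = 1) ∧
          -- (i) strategyproof in expectation
          (∀ (R : Fin n → (Fin m ≃ Fin m)) (i : Fin n) (ci : Fin m → ℝ),
            (∀ j, 0 ≤ ci j) →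
            (∀ k k' : Fin m, k ≤ k' → ci (R i k') ≤ ci (R i k)) →
            ∀ R'i : Fin m ≃ Fin m,
              ∑ x : Fin m → Fin n, A R x *
                  ∑ j ∈ Finset.univ.filter (fun j => x j = i), ci j ≤
                ∑ x : Fin m → Fin n, A (Function.update R i R'i) x *
                  ∑ j ∈ Finset.univ.filter (fun j => x j = i), ci j) ∧
          -- (ii) expected approximation ratio at most C·√(1 + log₂ n)
          (∀ (R : Fin n → (Fin m ≃ Fin m)) (c : Fin n → Fin m → ℝ),
            (∀ i j, 0 ≤ c i j) →
            (∀ i : Fin n, ∃ j, c i j ≠ 0) →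
            (∀ (i : Fin n) (k k' : Fin m), k ≤ k' → c i (R i k') ≤ c i (R i k)) →
            ∑ x : Fin m → Fin n, A R x *
                (⨆ i : Fin n,
                  (∑ j ∈ Finset.univ.filter (fun j => x j = i), c i j) /
                    MMS n m (c i)) ≤
              C * Real.sqrt (1 + Real.logb 2 (n : ℝ))) := by
  refine ⟨2, two_pos, fun n m hn2 _ => ?_⟩
  have hn : 0 < n := by omega
  have : Nonempty (Fin n) := ⟨⟨0, hn⟩⟩
  choose w hw0 hw1 hmarg hblock using
    fun R : Fin n → (Fin m ≃ Fin m) => exists_matching_lottery hn R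
  have expected_cost : ∀ (R : Fin n → (Fin m ≃ Fin m)) (i : Fin n) (ci : Fin m → ℝ),
      ∑ σ, w R σ * ∑ j ∈ Finset.univ.filter (fun j => matchingAllocation n m hn σ j = i), ci j =
        ∑ j, (n : ℝ)⁻¹ * ci j := by
    intro R i ci
    simp only [Finset.sum_filter, Finset.mul_sum]
    rw [Finset.sum_comm]
    refine Finset.sum_congr rfl fun j _ => ?_
    rw [← hmarg R j i, Finset.sum_mul]
    refine Finset.sum_congr rfl fun σ _ => ?_
    split_ifs <;> simp
  refine ⟨fun R x => ∑ σ, if matchingAllocation n m hn σ = x then w R σ else 0,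
    fun R => ⟨fun x => Finset.sum_nonneg fun σ _ => ?_, ?_⟩, fun R i ci _ _ R'i => ?_,
    fun R c hc hne hr => ?_⟩
  · split_ifs
    exacts [hw0 R σ, le_rfl]
  · simpa [hw1 R] using sum_pushforward_mul (w R) (matchingAllocation n m hn) (fun _ => 1)
  · beta_reduce
    rw [sum_pushforward_mul _ _ fun x : Fin m → Fin n =>
        ∑ j ∈ Finset.univ.filter (fun j => x j = i), ci j,
      sum_pushforward_mul _ _ fun x : Fin m → Fin n =>
        ∑ j ∈ Finset.univ.filter (fun j => x j = i), ci j,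
      expected_cost, expected_cost]
  · beta_reduce
    rw [sum_pushforward_mul _ _ fun x : Fin m → Fin n => ⨆ i : Fin n,
      (∑ j ∈ Finset.univ.filter (fun j => x j = i), c i j) / MMS n m (c i)]
    have hlog : 0 ≤ Real.logb 2 (n : ℝ) :=
      Real.logb_nonneg one_lt_two (by exact_mod_cast hn)
    calc _ ≤ ∑ σ, w R σ * 2 := Finset.sum_le_sum fun σ _ => by
          by_cases hσ : w R σ = 0
          · simp [hσ]
          refine mul_le_mul_of_nonneg_left (ciSup_le fun i => ?_) (hw0 R σ)
          obtain ⟨j, hj⟩ := hne i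
          have hM : 0 < MMS n m (c i) :=
            (lt_of_le_of_ne (hc i j) hj.symm).trans_le (cost_le_MMS hn (c i) (hc i) j)
          rw [div_le_iff₀ hM]
          exact matchingAllocation_cost_le hn R σ (hblock R σ hσ) i (c i) (hc i) (hr i)
      _ = 2 * 1 := by rw [← Finset.sum_mul, hw1, one_mul, mul_one]
      _ ≤ 2 * Real.sqrt (1 + Real.logb 2 (n : ℝ)) :=
          mul_le_mul_of_nonneg_left (Real.one_le_sqrt.mpr (by linarith)) zero_le_two
end
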